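/- Desargues' theorem in dimension 3 for tetrahedra. Let rk be a rank function satisfying (A1)–(A4) and rk X ≤ 4 for every finite set X. Let O; A, B, C, D; A', B', C', D' be points with rk{A,B,C,D} = 4 and rk{A',B',C',D'} = 4 (two tetrahedra), in perspective from O: for each pair (X,X') among (A,A'), (B,B'), (C,C'), (D,D') one has rk{O,X,X'} = 2, rk{O,X} = 2, rk{O,X'} = 2, rk{X,X'} = 2; and O is independent of each tetrahedron, i.e. rk{O,X,Y,Z} = 4 for every three distinct vertices X, Y, Z of {A,B,C,D} and of {A',B',C',D'}. Let P_AB, P_AC, P_AD, P_BC, P_BD, P_CD be points such that for each pair (X,Y) of distinct vertices, rk{X,Y,P_XY} = 2 and rk{X',Y',P_XY} = 2 (P_XY is the intersection of corresponding edges). Then rk{P_AB, P_AC, P_AD, P_BC, P_BD, P_CD} = 3 (the six points lie in a common plane) and for each face {X,Y,Z} of the tetrahedron (i.e. each of the four 3-element subsets of {A,B,C,D}) one has rk{P_XY, P_XZ, P_YZ} ≤ 2; that is, the six points form a complete quadrilateral. -/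

import Mathlib

/-!
Two distinct planes share at most a line. Corresponding faces `ABC` and `A'B'C'` span distinct
planes: together they span the centre `O`, which lies on `AA'` but not in the plane `ABC`. The
intersection points of corresponding sides lie in both planes and so are collinear.
The three points on the edges through `A` differ from `A`, so together with `A` they span the whole
tetrahedron and have rank `3`. By the collinearities, the other three points lie in their plane.
-/

open Finset

/-- The rank axioms (A1)–(A3) of a matroid on an arbitrary type of points. Axiom (A4), that there
are no loops, is kept separate because most of the theory does not depend on it. -/
structure IsRankFunction {Pt : Type*} [DecidableEq Pt] (rk : Finset Pt → ℕ) : Prop where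
  rk_le_card : ∀ X, rk X ≤ #X
  mono : Monotone rk
  submodular : ∀ X Y, rk (X ∪ Y) + rk (X ∩ Y) ≤ rk X + rk Y

/-- The flat spanned by a finite set: the points whose adjunction does not increase the rank.
It is a `Set` because a flat, such as a line or a plane, may be infinite. -/
def rankClosure {Pt : Type*} [DecidableEq Pt] (rk : Finset Pt → ℕ) (S : Finset Pt) : Set Pt :=
  {p | rk (insert p S) ≤ rk S}

theorem coe_subset_rankClosure {Pt : Type*} [DecidableEq Pt] (rk : Finset Pt → ℕ)
    (S : Finset Pt) : (S : Set Pt) ⊆ rankClosure rk S := by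
  intro p hp
  simp [rankClosure, insert_eq_of_mem (mem_coe.mp hp)]

namespace IsRankFunction

variable {Pt : Type*} [DecidableEq Pt] {rk : Finset Pt → ℕ} {S T X Y : Finset Pt}
  {O A B C D A' B' C' P Q R U V W p w x y z : Pt}

theorem rk_insert_le (hrk : IsRankFunction rk) (p : Pt) (S : Finset Pt) :
    rk (insert p S) ≤ rk S + 1 := by
  have hp : rk {p} ≤ 1 := hrk.rk_le_card {p}
  have h := hrk.submodular {p} S
  rw [← insert_eq] at h
  omega

theorem rk_le_add_one_of_subset_insert (hrk : IsRankFunction rk) (h : T ⊆ insert p S) :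
    rk T ≤ rk S + 1 :=
  (hrk.mono h).trans (hrk.rk_insert_le p S)

theorem rankClosure_mono (hrk : IsRankFunction rk) (hST : S ⊆ T) :
    rankClosure rk S ⊆ rankClosure rk T := by
  intro p (hp : rk (insert p S) ≤ rk S)
  have hsub := hrk.submodular (insert p S) T
  have hinter : rk S ≤ rk (insert p S ∩ T) := hrk.mono (subset_inter (subset_insert p S) hST)
  have hunion : rk (insert p T) ≤ rk (insert p S ∪ T) := hrk.mono (by grind)
  change rk (insert p T) ≤ rk T
  omega

theorem subset_rankClosure_of_rk_le (hrk : IsRankFunction rk) (hST : S ⊆ T) (h : rk T ≤ rk S) :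
    (T : Set Pt) ⊆ rankClosure rk S :=
  fun _ hp ↦ (hrk.mono (insert_subset (mem_coe.mp hp) hST)).trans h

theorem rk_union_le_of_subset_rankClosure (hrk : IsRankFunction rk)
    (h : (T : Set Pt) ⊆ rankClosure rk S) : rk (S ∪ T) ≤ rk S := by
  induction T using Finset.induction_on with
  | empty => simp
  | insert p T _ ih =>
    rw [coe_insert, Set.insert_subset_iff] at h
    rw [union_insert]
    exact (hrk.rankClosure_mono subset_union_left h.1).trans (ih h.2)

theorem rk_le_of_subset_rankClosure (hrk : IsRankFunction rk)
    (h : (T : Set Pt) ⊆ rankClosure rk S) : rk T ≤ rk S :=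
  (hrk.mono subset_union_right).trans (hrk.rk_union_le_of_subset_rankClosure h)

theorem rankClosure_subset_rankClosure (hrk : IsRankFunction rk)
    (h : (T : Set Pt) ⊆ rankClosure rk S) : rankClosure rk T ⊆ rankClosure rk S := by
  intro p hp
  have hpST : rk (insert p (S ∪ T)) ≤ rk (S ∪ T) := hrk.rankClosure_mono subset_union_right hp
  calc rk (insert p S) ≤ rk (insert p (S ∪ T)) :=
        hrk.mono (insert_subset_insert p subset_union_left)
    _ ≤ rk (S ∪ T) := hpST
    _ ≤ rk S := hrk.rk_union_le_of_subset_rankClosure h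

theorem rk_union_add_rk_le (hrk : IsRankFunction rk) (hX : (S : Set Pt) ⊆ rankClosure rk X)
    (hY : (S : Set Pt) ⊆ rankClosure rk Y) : rk (X ∪ Y) + rk S ≤ rk X + rk Y :=
  calc rk (X ∪ Y) + rk S ≤ rk ((X ∪ S) ∪ (Y ∪ S)) + rk ((X ∪ S) ∩ (Y ∪ S)) := by
        gcongr <;> apply hrk.mono <;> grind
    _ ≤ rk (X ∪ S) + rk (Y ∪ S) := hrk.submodular _ _
    _ ≤ rk X + rk Y := add_le_add (hrk.rk_union_le_of_subset_rankClosure hX)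
        (hrk.rk_union_le_of_subset_rankClosure hY)

theorem mem_rankClosure_pair (hrk : IsRankFunction rk) (hxy : 2 ≤ rk {x, y})
    (h : rk {x, y, z} ≤ 2) : z ∈ rankClosure rk {x, y} :=
  hrk.subset_rankClosure_of_rk_le (T := {x, y, z}) (by grind) (h.trans hxy) (by simp)

theorem mem_rankClosure_pair_exchange (hrk : IsRankFunction rk) (hxz : 2 ≤ rk {x, z})
    (h : rk {x, y, z} ≤ 2) : y ∈ rankClosure rk {x, z} :=
  hrk.subset_rankClosure_of_rk_le (T := {x, y, z}) (by grind) (h.trans hxz) (by simp)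

theorem two_le_rk_sides (hrk : IsRankFunction rk) (h : 3 ≤ rk {x, y, z}) :
    2 ≤ rk {x, y} ∧ 2 ≤ rk {x, z} ∧ 2 ≤ rk {y, z} := by
  have hx := hrk.rk_insert_le x {y, z}
  have hy := hrk.rk_le_add_one_of_subset_insert (T := {x, y, z}) (S := {x, z}) (p := y) (by grind)
  have hz := hrk.rk_le_add_one_of_subset_insert (T := {x, y, z}) (S := {x, y}) (p := z) (by grind)
  omega

theorem three_le_rk_faces (hrk : IsRankFunction rk) (h : rk {w, x, y, z} = 4) :
    3 ≤ rk {w, x, y} ∧ 3 ≤ rk {w, x, z} ∧ 3 ≤ rk {w, y, z} ∧ 3 ≤ rk {x, y, z} := by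
  have hw := hrk.rk_insert_le w {x, y, z}
  have hx := hrk.rk_le_add_one_of_subset_insert
    (T := {w, x, y, z}) (S := {w, y, z}) (p := x) (by grind)
  have hy := hrk.rk_le_add_one_of_subset_insert
    (T := {w, x, y, z}) (S := {w, x, z}) (p := y) (by grind)
  have hz := hrk.rk_le_add_one_of_subset_insert
    (T := {w, x, y, z}) (S := {w, x, y}) (p := z) (by grind)
  omega

theorem side_points_subset_rankClosure_triangle (hrk : IsRankFunction rk) (hABC : 3 ≤ rk {A, B, C})
    (hP : rk {A, B, P} ≤ 2) (hQ : rk {A, C, Q} ≤ 2) (hR : rk {B, C, R} ≤ 2) :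
    (({P, Q, R} : Finset Pt) : Set Pt) ⊆ rankClosure rk {A, B, C} := by
  obtain ⟨hAB, hAC, hBC⟩ := hrk.two_le_rk_sides hABC
  simp only [coe_insert, coe_singleton, Set.insert_subset_iff, Set.singleton_subset_iff]
  exact ⟨hrk.rankClosure_mono (by grind) (hrk.mem_rankClosure_pair hAB hP),
    hrk.rankClosure_mono (by grind) (hrk.mem_rankClosure_pair hAC hQ),
    hrk.rankClosure_mono (by grind) (hrk.mem_rankClosure_pair hBC hR)⟩

theorem rk_le_two_of_spatial_triangles (hrk : IsRankFunction rk)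
    (hABC : 3 ≤ rk {A, B, C}) (hABC' : 3 ≤ rk {A', B', C'})
    (hspan : 4 ≤ rk ({A, B, C} ∪ {A', B', C'}))
    (hP : rk {A, B, P} ≤ 2) (hP' : rk {A', B', P} ≤ 2)
    (hQ : rk {A, C, Q} ≤ 2) (hQ' : rk {A', C', Q} ≤ 2)
    (hR : rk {B, C, R} ≤ 2) (hR' : rk {B', C', R} ≤ 2) : rk {P, Q, R} ≤ 2 := by
  have hle := hrk.rk_union_add_rk_le (hrk.side_points_subset_rankClosure_triangle hABC hP hQ hR)
    (hrk.side_points_subset_rankClosure_triangle hABC' hP' hQ' hR')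
  have hplane := (hrk.rk_le_card {A, B, C}).trans card_le_three
  have hplane' := (hrk.rk_le_card {A', B', C'}).trans card_le_three
  omega

theorem rk_le_two_of_perspective (hrk : IsRankFunction rk)
    (hO : O ∈ rankClosure rk {A, A'})
    (hOABC : rk {O, A, B, C} = 4) (hOABC' : rk {O, A', B', C'} = 4)
    (hP : rk {A, B, P} ≤ 2) (hP' : rk {A', B', P} ≤ 2)
    (hQ : rk {A, C, Q} ≤ 2) (hQ' : rk {A', C', Q} ≤ 2)
    (hR : rk {B, C, R} ≤ 2) (hR' : rk {B', C', R} ≤ 2) : rk {P, Q, R} ≤ 2 := by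
  obtain ⟨-, -, -, hABC⟩ := hrk.three_le_rk_faces hOABC
  obtain ⟨-, -, -, hABC'⟩ := hrk.three_le_rk_faces hOABC'
  have hspan : rk {O, A, B, C} ≤ rk ({A, B, C} ∪ {A', B', C'}) := by
    refine hrk.rk_le_of_subset_rankClosure ?_
    rw [coe_insert, Set.insert_subset_iff]
    exact ⟨hrk.rankClosure_mono (by grind) hO,
      (coe_subset_rankClosure rk _).trans (hrk.rankClosure_mono subset_union_left)⟩
  exact hrk.rk_le_two_of_spatial_triangles hABC hABC' (hOABC ▸ hspan) hP hP' hQ hQ' hR hR'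

/-- If `P` were `A`, then `A` and hence `O` would lie on the line `A'B'`. -/
theorem two_le_rk_vertex_edge_point (hrk : IsRankFunction rk)
    (hO : O ∈ rankClosure rk {A, A'}) (hOAB' : 3 ≤ rk {O, A', B'})
    (hP : 1 ≤ rk {P}) (hP' : rk {A', B', P} ≤ 2) : 2 ≤ rk {A, P} := by
  by_contra! hAP
  have hPmem : P ∈ rankClosure rk {A', B'} :=
    hrk.mem_rankClosure_pair (hrk.two_le_rk_sides hOAB').2.2 hP'
  have hAmem : A ∈ rankClosure rk {A', B'} :=
    hrk.rankClosure_subset_rankClosure (by simpa using hPmem)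
      (show rk {A, P} ≤ rk {P} by omega)
  have hA'mem : A' ∈ rankClosure rk {A', B'} := coe_subset_rankClosure rk _ (by simp)
  have hOmem : rk {O, A', B'} ≤ rk {A', B'} :=
    hrk.rankClosure_subset_rankClosure (by simp [Set.insert_subset_iff, hAmem, hA'mem]) hO
  have hline := (hrk.rk_le_card {A', B'}).trans card_le_two
  omega

theorem rk_edge_points_at_vertex_eq_three (hrk : IsRankFunction rk) (hT : rk {A, B, C, D} = 4)
    (hB : B ∈ rankClosure rk {A, P}) (hC : C ∈ rankClosure rk {A, Q})
    (hD : D ∈ rankClosure rk {A, R}) : rk {P, Q, R} = 3 := by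
  have hspan : rk {A, B, C, D} ≤ rk {A, P, Q, R} := by
    refine hrk.rk_le_of_subset_rankClosure ?_
    simp only [coe_insert, coe_singleton, Set.insert_subset_iff, Set.singleton_subset_iff]
    exact ⟨coe_subset_rankClosure rk _ (by simp), hrk.rankClosure_mono (by grind) hB,
      hrk.rankClosure_mono (by grind) hC, hrk.rankClosure_mono (by grind) hD⟩
  have hinsert := hrk.rk_insert_le A {P, Q, R}
  have hcard := (hrk.rk_le_card {P, Q, R}).trans card_le_three
  omega

theorem rk_complete_quadrilateral_eq_three (hrk : IsRankFunction rk) (hPQR : rk {P, Q, R} = 3)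
    (hU : rk {P, Q, U} ≤ 2) (hV : rk {P, R, V} ≤ 2) (hW : rk {Q, R, W} ≤ 2) :
    rk {P, Q, R, U, V, W} = 3 := by
  have hplane := hrk.side_points_subset_rankClosure_triangle hPQR.ge hU hV hW
  have hle : rk ({P, Q, R} ∪ {U, V, W}) ≤ 3 :=
    (hrk.rk_union_le_of_subset_rankClosure hplane).trans hPQR.le
  have hge : rk {P, Q, R} ≤ rk {P, Q, R, U, V, W} := hrk.mono (by grind)
  rw [insert_union, insert_union, singleton_union] at hle
  omega

end IsRankFunction

theorem stmt_11_general {Pt : Type*} [DecidableEq Pt] {rk : Finset Pt → ℕ}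
    (hrk : IsRankFunction rk) (hA4 : ∀ p : Pt, rk {p} = 1)
    {O A B C D A' B' C' D' P_AB P_AC P_AD P_BC P_BD P_CD : Pt}
    (hT : rk {A, B, C, D} = 4)
    (hOAA' : rk {O, A, A'} ≤ 2) (hAA' : rk {A, A'} = 2)
    (hOBB' : rk {O, B, B'} ≤ 2) (hBB' : rk {B, B'} = 2)
    (hO1 : rk {O, A, B, C} = 4) (hO2 : rk {O, A, B, D} = 4)
    (hO3 : rk {O, A, C, D} = 4) (hO4 : rk {O, B, C, D} = 4)
    (hO1' : rk {O, A', B', C'} = 4) (hO2' : rk {O, A', B', D'} = 4)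
    (hO3' : rk {O, A', C', D'} = 4) (hO4' : rk {O, B', C', D'} = 4)
    (hPAB : rk {A, B, P_AB} ≤ 2) (hPAB' : rk {A', B', P_AB} ≤ 2)
    (hPAC : rk {A, C, P_AC} ≤ 2) (hPAC' : rk {A', C', P_AC} ≤ 2)
    (hPAD : rk {A, D, P_AD} ≤ 2) (hPAD' : rk {A', D', P_AD} ≤ 2)
    (hPBC : rk {B, C, P_BC} ≤ 2) (hPBC' : rk {B', C', P_BC} ≤ 2)
    (hPBD : rk {B, D, P_BD} ≤ 2) (hPBD' : rk {B', D', P_BD} ≤ 2)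
    (hPCD : rk {C, D, P_CD} ≤ 2) (hPCD' : rk {C', D', P_CD} ≤ 2) :
    rk {P_AB, P_AC, P_AD, P_BC, P_BD, P_CD} = 3 ∧
    rk {P_AB, P_AC, P_BC} ≤ 2 ∧
    rk {P_AB, P_AD, P_BD} ≤ 2 ∧
    rk {P_AC, P_AD, P_CD} ≤ 2 ∧
    rk {P_BC, P_BD, P_CD} ≤ 2 := by
  have hO : O ∈ rankClosure rk {A, A'} := hOAA'.trans hAA'.ge
  have hABC : rk {P_AB, P_AC, P_BC} ≤ 2 :=
    hrk.rk_le_two_of_perspective hO hO1 hO1' hPAB hPAB' hPAC hPAC' hPBC hPBC'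
  have hABD : rk {P_AB, P_AD, P_BD} ≤ 2 :=
    hrk.rk_le_two_of_perspective hO hO2 hO2' hPAB hPAB' hPAD hPAD' hPBD hPBD'
  have hACD : rk {P_AC, P_AD, P_CD} ≤ 2 :=
    hrk.rk_le_two_of_perspective hO hO3 hO3' hPAC hPAC' hPAD hPAD' hPCD hPCD'
  have hBCD : rk {P_BC, P_BD, P_CD} ≤ 2 :=
    hrk.rk_le_two_of_perspective (hOBB'.trans hBB'.ge) hO4 hO4' hPBC hPBC' hPBD hPBD' hPCD hPCD'
  obtain ⟨hOAB', hOAC', -, -⟩ := hrk.three_le_rk_faces hO1'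
  obtain ⟨-, hOAD', -, -⟩ := hrk.three_le_rk_faces hO2'
  have hAPB := hrk.two_le_rk_vertex_edge_point hO hOAB' (hA4 P_AB).ge hPAB'
  have hAPC := hrk.two_le_rk_vertex_edge_point hO hOAC' (hA4 P_AC).ge hPAC'
  have hAPD := hrk.two_le_rk_vertex_edge_point hO hOAD' (hA4 P_AD).ge hPAD'
  have hstar : rk {P_AB, P_AC, P_AD} = 3 := hrk.rk_edge_points_at_vertex_eq_three hT
    (hrk.mem_rankClosure_pair_exchange hAPB hPAB) (hrk.mem_rankClosure_pair_exchange hAPC hPAC)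
    (hrk.mem_rankClosure_pair_exchange hAPD hPAD)
  exact ⟨hrk.rk_complete_quadrilateral_eq_three hstar hABC hABD hACD, hABC, hABD, hACD, hBCD⟩

/-- Desargues' theorem in dimension 3 for tetrahedra: the six
intersection points of corresponding edges of two tetrahedra in perspective
from a point lie in a common plane and form a complete quadrilateral. -/
theorem stmt_11 {Pt : Type*} [DecidableEq Pt] (rk : Finset Pt → ℕ)
    (hA1 : ∀ X : Finset Pt, rk X ≤ X.card)
    (hA2 : ∀ X Y : Finset Pt, X ⊆ Y → rk X ≤ rk Y)
    (hA3 : ∀ X Y : Finset Pt, rk (X ∪ Y) + rk (X ∩ Y) ≤ rk X + rk Y)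
    (hA4 : ∀ p : Pt, rk {p} = 1)
    (hA9 : ∀ X : Finset Pt, rk X ≤ 4)
    (O A B C D A' B' C' D' : Pt)
    (P_AB P_AC P_AD P_BC P_BD P_CD : Pt)
    -- the two tetrahedra
    (hT : rk {A, B, C, D} = 4)
    (hT' : rk {A', B', C', D'} = 4)
    -- perspective from O
    (hOAA' : rk {O, A, A'} = 2) (hOA : rk {O, A} = 2) (hOA' : rk {O, A'} = 2) (hAA' : rk {A, A'} = 2)
    (hOBB' : rk {O, B, B'} = 2) (hOB : rk {O, B} = 2) (hOB' : rk {O, B'} = 2) (hBB' : rk {B, B'} = 2)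
    (hOCC' : rk {O, C, C'} = 2) (hOC : rk {O, C} = 2) (hOC' : rk {O, C'} = 2) (hCC' : rk {C, C'} = 2)
    (hODD' : rk {O, D, D'} = 2) (hOD : rk {O, D} = 2) (hOD' : rk {O, D'} = 2) (hDD' : rk {D, D'} = 2)
    -- O is independent of each tetrahedron
    (hO1 : rk {O, A, B, C} = 4) (hO2 : rk {O, A, B, D} = 4)
    (hO3 : rk {O, A, C, D} = 4) (hO4 : rk {O, B, C, D} = 4)
    (hO1' : rk {O, A', B', C'} = 4) (hO2' : rk {O, A', B', D'} = 4)
    (hO3' : rk {O, A', C', D'} = 4) (hO4' : rk {O, B', C', D'} = 4)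
    -- intersection points of corresponding edges
    (hPAB : rk {A, B, P_AB} = 2) (hPAB' : rk {A', B', P_AB} = 2)
    (hPAC : rk {A, C, P_AC} = 2) (hPAC' : rk {A', C', P_AC} = 2)
    (hPAD : rk {A, D, P_AD} = 2) (hPAD' : rk {A', D', P_AD} = 2)
    (hPBC : rk {B, C, P_BC} = 2) (hPBC' : rk {B', C', P_BC} = 2)
    (hPBD : rk {B, D, P_BD} = 2) (hPBD' : rk {B', D', P_BD} = 2)
    (hPCD : rk {C, D, P_CD} = 2) (hPCD' : rk {C', D', P_CD} = 2) :
    rk {P_AB, P_AC, P_AD, P_BC, P_BD, P_CD} = 3 ∧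
    rk {P_AB, P_AC, P_BC} ≤ 2 ∧
    rk {P_AB, P_AD, P_BD} ≤ 2 ∧
    rk {P_AC, P_AD, P_CD} ≤ 2 ∧
    rk {P_BC, P_BD, P_CD} ≤ 2 := by
  exact stmt_11_general ⟨hA1, fun X Y ↦ hA2 X Y, hA3⟩ hA4 hT hOAA'.le hAA' hOBB'.le hBB'
    hO1 hO2 hO3 hO4 hO1' hO2' hO3' hO4' hPAB.le hPAB'.le hPAC.le hPAC'.le hPAD.le hPAD'.le
    hPBC.le hPBC'.le hPBD.le hPBD'.le hPCD.le hPCD'.le
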